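/- arXiv:2512.23198 — 2 statements merged into one kernel-verified Lean document; each statement's English description precedes it below -/
import Mathlib

section
/- For every y ∈ ℝ + i(-π,π), one has the integral representation (-i/(2π))·Li₂(-e^y) = ∫_{v ∈ ℝ + i0⁺} exp(-i y v/π) / (4 v² sinh v) dv, where the contour ℝ + i0⁺ is the real line deformed to pass above 0. -/
open Complex Real

/-- The principal dilogarithm, `Li₂(z) = -∫₀^z Log(1-u) du/u`. -/
noncomputable def dilog (z : ℂ) : ℂ :=
  -∫ t in (0:ℝ)..1, Complex.log (1 - (t : ℂ) * z) / (t : ℂ)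

open MeasureTheory Set Filter Topology

theorem integrable_exp_neg_mul_abs {c : ℝ} (hc : 0 < c) :
    Integrable fun x : ℝ => Real.exp (-(c * |x|)) := by
  rw [← integrableOn_univ, ← Iic_union_Ioi (a := (0 : ℝ))]
  refine IntegrableOn.union ?_ ?_
  · refine (integrableOn_exp_mul_Iic hc 0).congr_fun (fun x hx => ?_) measurableSet_Iic
    simp [abs_of_nonpos (mem_Iic.1 hx)]
  · refine (exp_neg_integrableOn_Ioi 0 hc).congr_fun (fun x hx => ?_) measurableSet_Ioi
    simp [abs_of_pos (mem_Ioi.1 hx)]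

theorem re_add_im_mul_I_ne_zero {ε : ℝ} (hε : 0 < ε) (x : ℝ) : (x : ℂ) + ε * I ≠ 0 := by
  intro h
  have := congrArg Complex.im h
  simp at this
  exact hε.ne' this

theorem sin_mul_exp_abs_le_norm_sinh {ε : ℝ} (hε : 0 < ε) (hεπ : ε < π) (x : ℝ) :
    Real.sin ε * Real.exp |x| ≤ 2 * ‖Complex.sinh (x + ε * I)‖ := by
  have hs : 0 < Real.sin ε := Real.sin_pos_of_pos_of_lt_pi hε hεπ
  have hn : ‖Complex.sinh (x + ε * I)‖ ^ 2 = Real.sinh x ^ 2 + Real.sin ε ^ 2 := by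
    rw [Complex.sq_norm, Complex.sinh_add, Complex.sinh_mul_I, Complex.cosh_mul_I,
      ← Complex.ofReal_sinh, ← Complex.ofReal_cosh, ← Complex.ofReal_sin, ← Complex.ofReal_cos,
      ← mul_assoc, ← Complex.ofReal_mul, ← Complex.ofReal_mul, Complex.normSq_add_mul_I]
    linear_combination Real.sinh x ^ 2 * Real.sin_sq_add_cos_sq ε +
      Real.sin ε ^ 2 * Real.cosh_sq x
  have he : Real.exp |x| ^ 2 ≤ 2 + 4 * Real.sinh x ^ 2 := by
    have h : Real.sinh |x| ^ 2 = Real.sinh x ^ 2 := by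
      rcases abs_choice x with h | h <;> simp [h]
    rw [← h, ← Real.cosh_add_sinh]
    nlinarith [Real.cosh_sq |x|, sq_nonneg (Real.cosh |x| - Real.sinh |x|)]
  refine abs_le_of_sq_le_sq' ?_ (by positivity) |>.2
  nlinarith [Real.sin_sq_le_one ε, sq_nonneg (Real.sinh x), sq_nonneg (Real.sin ε),
    mul_le_mul_of_nonneg_left he (sq_nonneg (Real.sin ε))]

theorem sinh_re_add_im_mul_I_ne_zero {ε : ℝ} (hε : 0 < ε) (hεπ : ε < π) (x : ℝ) :
    Complex.sinh (x + ε * I) ≠ 0 := by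
  intro h
  have := sin_mul_exp_abs_le_norm_sinh hε hεπ x
  rw [h, norm_zero, mul_zero] at this
  exact this.not_gt (mul_pos (Real.sin_pos_of_pos_of_lt_pi hε hεπ) (Real.exp_pos _))

theorem norm_inv_sinh_le {ε : ℝ} (hε : 0 < ε) (hεπ : ε < π) (x : ℝ) :
    ‖(Complex.sinh (x + ε * I))⁻¹‖ ≤ 2 / Real.sin ε * Real.exp (-|x|) := by
  have hs : 0 < Real.sin ε := Real.sin_pos_of_pos_of_lt_pi hε hεπ
  have h0 := norm_pos_iff.2 (sinh_re_add_im_mul_I_ne_zero hε hεπ x)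
  rw [norm_inv, Real.exp_neg, div_mul_eq_mul_div, ← div_eq_mul_inv, div_div,
    inv_le_comm₀ h0 (by positivity), inv_div, div_le_iff₀ two_pos]
  linarith [sin_mul_exp_abs_le_norm_sinh hε hεπ x]

theorem norm_exp_contour_le (ε : ℝ) (y : ℂ) (x : ℝ) :
    ‖Complex.exp (-I * y * (x + ε * I) / π)‖
      ≤ Real.exp (y.re * ε / π) * Real.exp (|y.im| / π * |x|) := by
  rw [Complex.norm_exp, ← Real.exp_add, Real.exp_le_exp]
  have h : (-I * y * (x + ε * I) / π).re = y.re * ε / π + y.im * x / π := by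
    rw [Complex.div_ofReal_re]
    simp
    ring
  rw [h, div_mul_eq_mul_div, ← abs_mul]
  gcongr
  exact le_abs_self _

theorem continuous_inv_pow_mul_sinh {ε : ℝ} (hε : 0 < ε) (hεπ : ε < π) (n : ℕ) :
    Continuous fun x : ℝ => (((x : ℂ) + ε * I) ^ n * Complex.sinh (x + ε * I))⁻¹ := by
  refine Continuous.inv₀ (by fun_prop) fun x => ?_
  exact mul_ne_zero (pow_ne_zero _ (re_add_im_mul_I_ne_zero hε x))
    (sinh_re_add_im_mul_I_ne_zero hε hεπ x)

theorem integrable_exp_mul_inv_pow_mul_sinh {ε : ℝ} (hε : 0 < ε) (hεπ : ε < π) {y : ℂ}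
    (hy : |y.im| < π) (n : ℕ) :
    Integrable fun x : ℝ => Complex.exp (-I * y * (x + ε * I) / π) *
      (((x : ℂ) + ε * I) ^ n * Complex.sinh (x + ε * I))⁻¹ := by
  have hc : 0 < 1 - |y.im| / π := by
    rw [sub_pos, div_lt_one Real.pi_pos]
    exact hy
  refine ((integrable_exp_neg_mul_abs hc).const_mul
    (Real.exp (y.re * ε / π) * ((ε ^ n)⁻¹ * (2 / Real.sin ε)))).mono' ?_ ?_
  · exact (Continuous.mul (by fun_prop)
      (continuous_inv_pow_mul_sinh hε hεπ n)).aestronglyMeasurable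
  · refine Eventually.of_forall fun x => ?_
    have hv : ε ≤ ‖(x : ℂ) + ε * I‖ := by
      refine le_trans (le_abs_self ε) ?_
      simpa using Complex.abs_im_le_norm ((x : ℂ) + ε * I)
    have hs : 0 < Real.sin ε := Real.sin_pos_of_pos_of_lt_pi hε hεπ
    calc _ ≤ (Real.exp (y.re * ε / π) * Real.exp (|y.im| / π * |x|)) *
          ((ε ^ n)⁻¹ * (2 / Real.sin ε * Real.exp (-|x|))) := by
          rw [norm_mul, mul_inv, norm_mul, norm_inv, norm_pow]
          gcongr
          · exact norm_exp_contour_le ε y x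
          · exact norm_inv_sinh_le hε hεπ x
      _ = _ := by
          rw [show -((1 - |y.im| / π) * |x|) = |y.im| / π * |x| + -|x| by ring, Real.exp_add]
          ring

theorem differentiableAt_integral_exp_div_sinh {ε : ℝ} (hε : 0 < ε) (hεπ : ε < π) {y₀ : ℂ}
    (hy : |y₀.im| < π) :
    DifferentiableAt ℂ (fun y : ℂ => ∫ x : ℝ, Complex.exp (-I * y * (x + ε * I) / π) *
      (Complex.sinh (x + ε * I))⁻¹) y₀ := by
  obtain ⟨b, hb, hbπ⟩ := exists_between hy
  have hs : 0 < Real.sin ε := Real.sin_pos_of_pos_of_lt_pi hε hεπ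
  have hc : 0 < (1 - b / π) / 2 := by
    have : b / π < 1 := (div_lt_one Real.pi_pos).2 hbπ
    linarith
  set c := (1 - b / π) / 2 with hcdef
  have hbd : b / π = 1 - 2 * c := by rw [hcdef]; ring
  have hU : {y : ℂ | |y.im| < b ∧ y.re < y₀.re + 1} ∈ 𝓝 y₀ := by
    refine IsOpen.mem_nhds ?_ ⟨hb, by simp⟩
    exact (isOpen_lt (continuous_abs.comp Complex.continuous_im) continuous_const).inter
      (isOpen_lt Complex.continuous_re continuous_const)
  have hcont : Continuous fun x : ℝ => (Complex.sinh (x + ε * I))⁻¹ := by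
    simpa using continuous_inv_pow_mul_sinh hε hεπ 0
  refine (hasDerivAt_integral_of_dominated_loc_of_deriv_le
    (F' := fun y (x : ℝ) => Complex.exp (-I * y * (x + ε * I) / π) * (-I * (x + ε * I) / π) *
      (Complex.sinh (x + ε * I))⁻¹)
    (bound := fun x => Real.exp ((y₀.re + 1) * ε / π) * ((1 / c + ε) / π) * (2 / Real.sin ε) *
      Real.exp (-(c * |x|)))
    hU ?_ ?_ ?_ ?_ ?_ ?_).2.differentiableAt
  · refine Eventually.of_forall fun y => Continuous.aestronglyMeasurable ?_
    exact Continuous.mul (by fun_prop) hcont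
  · simpa using integrable_exp_mul_inv_pow_mul_sinh hε hεπ hy 0
  · exact (Continuous.mul (by fun_prop) hcont).aestronglyMeasurable
  · refine Eventually.of_forall fun x y hyU => ?_
    have hx : |x| + ε ≤ (1 / c + ε) * Real.exp (c * |x|) := by
      have h1 : c * |x| ≤ Real.exp (c * |x|) := by linarith [Real.add_one_le_exp (c * |x|)]
      have h2 : 1 ≤ Real.exp (c * |x|) := Real.one_le_exp (by positivity)
      have h3 : |x| ≤ 1 / c * Real.exp (c * |x|) := by
        rw [one_div, ← div_eq_inv_mul, le_div_iff₀ hc]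
        linarith
      nlinarith
    have hv : ‖-I * ((x : ℂ) + ε * I) / π‖ ≤ (1 / c + ε) / π * Real.exp (c * |x|) := by
      rw [norm_div, norm_mul, norm_neg, Complex.norm_I, one_mul, Complex.norm_real,
        Real.norm_of_nonneg Real.pi_pos.le, div_mul_eq_mul_div]
      gcongr
      refine le_trans ((norm_add_le _ _).trans ?_) hx
      simp [abs_of_pos hε]
    have he : ‖Complex.exp (-I * y * (x + ε * I) / π)‖
        ≤ Real.exp ((y₀.re + 1) * ε / π) * Real.exp (b / π * |x|) := by
      refine (norm_exp_contour_le ε y x).trans ?_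
      have := hyU.1.le
      have := hyU.2.le
      gcongr
    calc _ ≤ (Real.exp ((y₀.re + 1) * ε / π) * Real.exp (b / π * |x|)) *
          ((1 / c + ε) / π * Real.exp (c * |x|)) * (2 / Real.sin ε * Real.exp (-|x|)) := by
          rw [norm_mul, norm_mul]
          gcongr
          exact norm_inv_sinh_le hε hεπ x
      _ = _ := by
          rw [show -(c * |x|) = b / π * |x| + c * |x| + -|x| by rw [hbd]; ring, Real.exp_add,
            Real.exp_add]
          ring
  · exact (integrable_exp_neg_mul_abs hc).const_mul _
  · refine Eventually.of_forall fun x y _ => ?_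
    have h : HasDerivAt (fun y : ℂ => -I * y * (x + ε * I) / π) (-I * (x + ε * I) / π) y := by
      simpa using (((hasDerivAt_id y).const_mul (-I)).mul_const ((x : ℂ) + ε * I)).div_const (π : ℂ)
    exact h.cexp.mul_const _


theorem image_div_one_add_Ioi : (fun x : ℝ => x / (1 + x)) '' Ioi 0 = Ioo 0 1 := by
  ext u
  simp only [mem_image, mem_Ioi, mem_Ioo]
  constructor
  · rintro ⟨x, hx, rfl⟩
    exact ⟨by positivity, by rw [div_lt_one (by positivity)]; linarith⟩
  · rintro ⟨h0, h1⟩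
    have h : 0 < 1 - u := by linarith
    exact ⟨u / (1 - u), by positivity, by field_simp; ring⟩

theorem hasDerivWithinAt_div_one_add {x : ℝ} (hx : x ∈ Ioi (0 : ℝ)) :
    HasDerivWithinAt (fun x : ℝ => x / (1 + x)) (((1 + x) ^ 2)⁻¹) (Ioi 0) x := by
  have hx0 : (0 : ℝ) < x := hx
  have h : 1 + x ≠ 0 := by positivity
  refine HasDerivAt.hasDerivWithinAt ?_
  convert! (hasDerivAt_id x).div ((hasDerivAt_id x).const_add 1) h using 1
  simp only [id]
  field_simp
  ring

theorem injOn_div_one_add : InjOn (fun x : ℝ => x / (1 + x)) (Ioi 0) := by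
  intro a ha b hb h
  have ha0 : (0 : ℝ) < a := ha
  have hb0 : (0 : ℝ) < b := hb
  simp only at h
  rw [div_eq_div_iff (by positivity) (by positivity)] at h
  linarith

theorem abs_deriv_smul_betaIntegrand (s : ℂ) {x : ℝ} (hx : x ∈ Ioi (0 : ℝ)) :
    |((1 + x) ^ 2)⁻¹| • (((x / (1 + x) : ℝ) : ℂ) ^ (s - 1) *
      (1 - ((x / (1 + x) : ℝ) : ℂ)) ^ (1 - s - 1)) = (x : ℂ) ^ (s - 1) • ((1 + x : ℂ))⁻¹ := by
  have hx0 : (0 : ℝ) < x := hx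
  have h1 : (0 : ℝ) < 1 + x := by linarith
  have hc : ∀ {r : ℝ} (w : ℂ), 0 < r → (r : ℂ) ^ w = Complex.exp (Real.log r * w) := by
    intro r w hr
    rw [Complex.cpow_def_of_ne_zero (by exact_mod_cast hr.ne'), Complex.ofReal_log hr.le]
  have e1 : (1 : ℂ) - ((x / (1 + x) : ℝ) : ℂ) = (((1 + x)⁻¹ : ℝ) : ℂ) := by
    rw [← Complex.ofReal_one, ← Complex.ofReal_sub]
    congr 1
    field_simp
    ring
  have e2 : ((1 : ℂ) + x)⁻¹ = Complex.exp (-Real.log (1 + x)) := by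
    rw [Complex.exp_neg, ← Complex.ofReal_exp, Real.exp_log h1]
    push_cast
    rfl
  have e3 : ((((1 + x) ^ 2)⁻¹ : ℝ) : ℂ) = Complex.exp (-2 * Real.log (1 + x)) := by
    rw [neg_mul, Complex.exp_neg, two_mul, Complex.exp_add, ← Complex.ofReal_exp, Real.exp_log h1]
    push_cast
    ring
  rw [abs_of_pos (by positivity), Complex.real_smul, e1, hc _ (by positivity),
    hc _ (by positivity), hc _ hx0, smul_eq_mul, e2, e3, Real.log_div hx0.ne' h1.ne', Real.log_inv,
    ← Complex.exp_add, ← Complex.exp_add, ← Complex.exp_add]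
  congr 1
  push_cast
  ring

theorem mellinConvergent_inv_one_add {s : ℂ} (h0 : 0 < s.re) (h1 : s.re < 1) :
    MellinConvergent (fun x : ℝ => ((1 : ℂ) + x)⁻¹) s := by
  have h := Complex.betaIntegral_convergent h0 (v := 1 - s) (by simpa using h1)
  rw [intervalIntegrable_iff_integrableOn_Ioo_of_le zero_le_one, ← image_div_one_add_Ioi,
    integrableOn_image_iff_integrableOn_abs_deriv_smul measurableSet_Ioi
      (fun x hx => hasDerivWithinAt_div_one_add hx) injOn_div_one_add] at h
  exact h.congr_fun (fun x hx => abs_deriv_smul_betaIntegrand s hx) measurableSet_Ioi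

theorem mellin_inv_one_add {s : ℂ} (h0 : 0 < s.re) (h1 : s.re < 1) :
    mellin (fun x : ℝ => ((1 : ℂ) + x)⁻¹) s = π / Complex.sin (π * s) := by
  rw [← Complex.Gamma_mul_Gamma_one_sub, Complex.Gamma_mul_Gamma_eq_betaIntegral h0
    (by simpa using h1), add_sub_cancel, Complex.Gamma_one, one_mul, Complex.betaIntegral,
    intervalIntegral.integral_of_le zero_le_one, integral_Ioc_eq_integral_Ioo,
    ← image_div_one_add_Ioi,
    integral_image_eq_integral_abs_deriv_smul measurableSet_Ioi
      (fun x hx => hasDerivWithinAt_div_one_add hx) injOn_div_one_add]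
  exact setIntegral_congr_fun measurableSet_Ioi
    fun x hx => (abs_deriv_smul_betaIntegrand s hx).symm

theorem mellin_inv_one_add_contour {ε : ℝ} (hε : 0 < ε) (hεπ : ε < π) (x : ℝ) :
    mellin (fun x : ℝ => ((1 : ℂ) + x)⁻¹) ((ε / π : ℝ) + (-π⁻¹ * x : ℝ) * I) =
      π * I * (Complex.sinh (x + ε * I))⁻¹ := by
  have hre : (((ε / π : ℝ) : ℂ) + (-π⁻¹ * x : ℝ) * I).re = ε / π := by
    rw [Complex.add_re, Complex.ofReal_re, Complex.re_ofReal_mul, Complex.I_re, mul_zero, add_zero]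
  have hπ : (π : ℂ) ≠ 0 := by exact_mod_cast Real.pi_ne_zero
  rw [mellin_inv_one_add (by rw [hre]; positivity) (by rw [hre]; exact (div_lt_one pi_pos).2 hεπ)]
  have h1 : (π : ℂ) * (((ε / π : ℝ) : ℂ) + (-π⁻¹ * x : ℝ) * I) = ε - x * I := by
    push_cast
    field_simp
    ring
  have h2 : (x : ℂ) + ε * I = (ε - x * I) * I := by
    linear_combination x * I_sq
  rw [h1, h2, Complex.sinh_mul_I, mul_inv, Complex.inv_I]
  linear_combination (π * (Complex.sin (ε - x * I))⁻¹) * I_sq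

theorem sigmoid_eq_integral_real {ε : ℝ} (hε : 0 < ε) (hεπ : ε < π) (y : ℝ) :
    Complex.exp y / (1 + Complex.exp y) = I / (2 * π) *
      ∫ x : ℝ, Complex.exp (-I * y * (x + ε * I) / π) * (Complex.sinh (x + ε * I))⁻¹ := by
  have hπ : (π : ℂ) ≠ 0 := by exact_mod_cast Real.pi_ne_zero
  have ha : -π⁻¹ ≠ 0 := by simp [Real.pi_ne_zero]
  have hσ0 : 0 < ε / π := by positivity
  have hσ1 : ε / π < 1 := (div_lt_one pi_pos).2 hεπ
  have hx : 0 < Real.exp (-y) := Real.exp_pos _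
  have hconv : MellinConvergent (fun x : ℝ => ((1 : ℂ) + x)⁻¹) ((ε / π : ℝ) : ℂ) :=
    mellinConvergent_inv_one_add (by simpa using hσ0) (by simpa using hσ1)
  have hvert : VerticalIntegrable (mellin fun x : ℝ => ((1 : ℂ) + x)⁻¹) (ε / π) := by
    rw [VerticalIntegrable, ← integrable_comp_mul_left_iff _ ha]
    simp_rw [mellin_inv_one_add_contour hε hεπ]
    refine Integrable.const_mul ?_ _
    simpa using integrable_exp_mul_inv_pow_mul_sinh hε hεπ (y := 0) (by simpa using pi_pos) 0
  have hcont : ContinuousAt (fun x : ℝ => ((1 : ℂ) + x)⁻¹) (Real.exp (-y)) := by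
    refine ContinuousAt.inv₀ (by fun_prop) ?_
    exact_mod_cast (by positivity : (0 : ℝ) < 1 + Real.exp (-y)).ne'
  have key := mellinInv_mellin_eq (ε / π) _ hx hconv hvert hcont
  have hsub := Measure.integral_comp_mul_left (fun t : ℝ =>
    ((Real.exp (-y) : ℝ) : ℂ) ^ (-(((ε / π : ℝ) : ℂ) + t * I)) •
      mellin (fun x : ℝ => ((1 : ℂ) + x)⁻¹) ((ε / π : ℝ) + t * I)) (-π⁻¹)
  have hpt : ∀ x : ℝ, ((Real.exp (-y) : ℝ) : ℂ) ^ (-(((ε / π : ℝ) : ℂ) + (-π⁻¹ * x : ℝ) * I)) •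
      mellin (fun x : ℝ => ((1 : ℂ) + x)⁻¹) ((ε / π : ℝ) + (-π⁻¹ * x : ℝ) * I) =
      π * I * (Complex.exp (-I * y * (x + ε * I) / π) * (Complex.sinh (x + ε * I))⁻¹) := by
    intro x
    rw [mellin_inv_one_add_contour hε hεπ, Complex.cpow_def_of_ne_zero (by exact_mod_cast hx.ne'),
      ← Complex.ofReal_log hx.le, Real.log_exp, smul_eq_mul]
    have : ((-y : ℝ) : ℂ) * -(((ε / π : ℝ) : ℂ) + (-π⁻¹ * x : ℝ) * I) =
        -I * y * (x + ε * I) / π := by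
      push_cast
      field_simp
      linear_combination (y * ε) * I_sq
    rw [this]
    ring
  simp_rw [hpt] at hsub
  rw [integral_const_mul, inv_neg, inv_inv, abs_neg, abs_of_pos pi_pos, Complex.real_smul] at hsub
  rw [mellinInv, Complex.real_smul, ← mul_left_cancel₀ hπ ((mul_assoc _ _ _).symm.trans hsub)] at key
  have hexp : Complex.exp y / (1 + Complex.exp y) = ((1 : ℂ) + (Real.exp (-y) : ℝ))⁻¹ := by
    rw [Complex.ofReal_exp, Complex.ofReal_neg, Complex.exp_neg]
    have h0 := Complex.exp_ne_zero y
    have h1 : 1 + (Complex.exp y)⁻¹ = (1 + Complex.exp y) / Complex.exp y := by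
      field_simp
      ring
    rw [h1, inv_div]
  rw [hexp, ← key]
  push_cast
  ring

theorem one_add_exp_mem_slitPlane {y : ℂ} (hy : |y.im| < π) : 1 + Complex.exp y ∈ slitPlane := by
  obtain ⟨h1, h2⟩ := abs_lt.1 hy
  rw [Complex.mem_slitPlane_iff, Complex.add_re, Complex.add_im, Complex.exp_re, Complex.exp_im]
  by_cases h : y.im = 0
  · left
    rw [h, Real.cos_zero, Complex.one_re]
    positivity
  · right
    rw [Complex.one_im, zero_add]
    refine mul_ne_zero (Real.exp_ne_zero _) fun hs => h ?_
    exact (Real.sin_eq_zero_iff_of_lt_of_lt h1 h2).1 hs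

theorem sigmoid_eq_integral {ε : ℝ} (hε : 0 < ε) (hεπ : ε < π) {y : ℂ} (hy : |y.im| < π) :
    Complex.exp y / (1 + Complex.exp y) = I / (2 * π) *
      ∫ x : ℝ, Complex.exp (-I * y * (x + ε * I) / π) * (Complex.sinh (x + ε * I))⁻¹ := by
  have hopen : IsOpen {y : ℂ | |y.im| < π} :=
    isOpen_lt (continuous_abs.comp Complex.continuous_im) continuous_const
  have hconn : IsPreconnected {y : ℂ | |y.im| < π} := by
    have := ((convex_Ioo (-π) π).linear_preimage Complex.imLm).isPreconnected
    convert this using 1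
    ext y
    exact abs_lt (a := y.im)
  refine AnalyticOnNhd.eqOn_of_preconnected_of_frequently_eq (z₀ := 0)
    (f := fun y => Complex.exp y / (1 + Complex.exp y)) (g := fun y => I / (2 * π) *
      ∫ x : ℝ, Complex.exp (-I * y * (x + ε * I) / π) * (Complex.sinh (x + ε * I))⁻¹)
    (DifferentiableOn.analyticOnNhd (fun y hy => ?_) hopen)
    (DifferentiableOn.analyticOnNhd (fun y hy => ?_) hopen) hconn (by simpa using pi_pos) ?_ hy
  · refine DifferentiableAt.differentiableWithinAt ?_
    exact DifferentiableAt.div (by fun_prop) (by fun_prop)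
      (Complex.slitPlane_ne_zero (one_add_exp_mem_slitPlane hy))
  · exact ((differentiableAt_integral_exp_div_sinh hε hεπ hy).const_mul _).differentiableWithinAt
  · have ht : Tendsto (fun x : ℝ => (x : ℂ)) (𝓝[≠] 0) (𝓝[≠] 0) := by
      refine tendsto_nhdsWithin_iff.2 ⟨?_, ?_⟩
      · exact (Complex.continuous_ofReal.tendsto' 0 0 Complex.ofReal_zero).mono_left
          nhdsWithin_le_nhds
      · filter_upwards [self_mem_nhdsWithin] with x hx
        simpa using hx
    exact ht.frequently (Eventually.of_forall fun x => sigmoid_eq_integral_real hε hεπ x).frequently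

theorem integral_inv_mul_exp_contour {ε : ℝ} (hε : 0 < ε) {y : ℂ} {K : ℝ → ℂ}
    (hK : Integrable fun x : ℝ => Complex.exp (-I * y * (x + ε * I) / π) * K x) :
    ∫ t in (0 : ℝ)..1, (t : ℂ)⁻¹ *
        ∫ x : ℝ, Complex.exp (-I * (y + Real.log t) * (x + ε * I) / π) * K x =
      π * I * ∫ x : ℝ, Complex.exp (-I * y * (x + ε * I) / π) * (((x : ℂ) + ε * I)⁻¹ * K x) := by
  have hπ : (π : ℂ) ≠ 0 := by exact_mod_cast Real.pi_ne_zero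
  have hre : ∀ x : ℝ, (-I * (x + ε * I) / π - 1).re = ε / π - 1 := by
    intro x
    rw [Complex.sub_re, Complex.div_ofReal_re]
    simp
  have hgt : -1 < ε / π - 1 := by
    have : 0 < ε / π := by positivity
    linarith
  have hpt : ∀ t ∈ Ioc (0 : ℝ) 1, ∀ x : ℝ,
      (t : ℂ)⁻¹ * (Complex.exp (-I * (y + Real.log t) * (x + ε * I) / π) * K x) =
      (t : ℂ) ^ (-I * (x + ε * I) / π - 1) *
        (Complex.exp (-I * y * (x + ε * I) / π) * K x) := by
    intro t ht x
    have h0 : (t : ℂ) ≠ 0 := by exact_mod_cast ht.1.ne'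
    rw [Complex.cpow_sub _ _ h0, Complex.cpow_one, Complex.cpow_def_of_ne_zero h0,
      ← Complex.ofReal_log ht.1.le,
      show -I * (y + Real.log t) * (x + ε * I) / π =
        Real.log t * (-I * (x + ε * I) / π) + -I * y * (x + ε * I) / π by ring, Complex.exp_add]
    ring
  have hint : Integrable (Function.uncurry fun (t x : ℝ) =>
      (t : ℂ) ^ (-I * (x + ε * I) / π - 1) *
        (Complex.exp (-I * y * (x + ε * I) / π) * K x))
      ((volume.restrict (Ioc 0 1)).prod volume) := by
    have hr : IntegrableOn (fun t : ℝ => t ^ (ε / π - 1)) (Ioc 0 1) :=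
      (intervalIntegrable_iff_integrableOn_Ioc_of_le zero_le_one).1
        (intervalIntegral.intervalIntegrable_rpow' hgt)
    refine (hr.mul_prod hK.norm).mono' ?_ ?_
    · refine AEStronglyMeasurable.mul ?_ hK.aestronglyMeasurable.comp_snd
      exact Measurable.aestronglyMeasurable (by fun_prop)
    · have : ∀ᵐ z : ℝ × ℝ ∂((volume.restrict (Ioc 0 1)).prod volume), z.1 ∈ Ioc (0 : ℝ) 1 :=
        Measure.quasiMeasurePreserving_fst.ae (ae_restrict_mem measurableSet_Ioc)
      filter_upwards [this] with z hz
      rw [Function.uncurry_def, norm_mul, Complex.norm_cpow_eq_rpow_re_of_pos hz.1, hre]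
  calc _ = ∫ t in Ioc (0 : ℝ) 1, ∫ x : ℝ, (t : ℂ) ^ (-I * (x + ε * I) / π - 1) *
        (Complex.exp (-I * y * (x + ε * I) / π) * K x) := by
        rw [intervalIntegral.integral_of_le zero_le_one]
        refine setIntegral_congr_fun measurableSet_Ioc fun t ht => ?_
        rw [← integral_const_mul]
        exact integral_congr_ae (Eventually.of_forall (hpt t ht))
    _ = ∫ x : ℝ, ∫ t in Ioc (0 : ℝ) 1, (t : ℂ) ^ (-I * (x + ε * I) / π - 1) *
        (Complex.exp (-I * y * (x + ε * I) / π) * K x) := integral_integral_swap hint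
    _ = _ := by
        rw [← integral_const_mul]
        refine integral_congr_ae (Eventually.of_forall fun x => ?_)
        beta_reduce
        have hv := re_add_im_mul_I_ne_zero hε x
        have hs : -I * (x + ε * I) / π ≠ 0 := by
          simp only [neg_mul, ne_eq, div_eq_zero_iff, neg_eq_zero, mul_eq_zero, I_ne_zero, hv, hπ,
            or_self, not_false_eq_true]
        rw [integral_mul_const, ← intervalIntegral.integral_of_le zero_le_one,
          integral_cpow (Or.inl (by rw [hre]; exact hgt)), sub_add_cancel, Complex.ofReal_one,
          Complex.one_cpow, Complex.ofReal_zero, Complex.zero_cpow hs, sub_zero]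
        have h : 1 / (-I * (x + ε * I) / π) = π * I * ((x : ℂ) + ε * I)⁻¹ := by
          rw [one_div, inv_div, div_eq_mul_inv, mul_inv, inv_neg, Complex.inv_I, neg_neg, mul_assoc]
        rw [h]
        ring

theorem log_one_add_exp_eq_integral {y : ℂ} (hy : |y.im| < π) :
    Complex.log (1 + Complex.exp y) = ∫ t in (0 : ℝ)..1, (t : ℂ)⁻¹ *
      (Complex.exp (y + Real.log t) / (1 + Complex.exp (y + Real.log t))) := by
  rw [Complex.log_eq_integral (one_add_exp_mem_slitPlane hy), ← intervalIntegral.integral_const_mul,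
    intervalIntegral.integral_of_le zero_le_one, intervalIntegral.integral_of_le zero_le_one]
  refine setIntegral_congr_fun measurableSet_Ioc fun t ht => ?_
  have h0 : (t : ℂ) ≠ 0 := by exact_mod_cast ht.1.ne'
  rw [Complex.exp_add, ← Complex.ofReal_exp, Real.exp_log ht.1, Complex.real_smul,
    mul_comm (t : ℂ) (Complex.exp y), div_eq_mul_inv]
  field_simp

theorem dilog_neg_exp_eq_integral (y : ℂ) :
    dilog (-Complex.exp y) = -∫ t in (0 : ℝ)..1, (t : ℂ)⁻¹ *
      Complex.log (1 + Complex.exp (y + Real.log t)) := by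
  rw [dilog, intervalIntegral.integral_of_le zero_le_one,
    intervalIntegral.integral_of_le zero_le_one]
  congr 1
  refine setIntegral_congr_fun measurableSet_Ioc fun t ht => ?_
  rw [Complex.exp_add, ← Complex.ofReal_exp, Real.exp_log ht.1, div_eq_inv_mul, mul_neg,
    sub_neg_eq_add, mul_comm (t : ℂ) (Complex.exp y)]

theorem log_one_add_exp_eq_contour_integral {ε : ℝ} (hε : 0 < ε) (hεπ : ε < π) {y : ℂ}
    (hy : |y.im| < π) :
    Complex.log (1 + Complex.exp y) = -(1 / 2) * ∫ x : ℝ,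
      Complex.exp (-I * y * (x + ε * I) / π) *
        (((x : ℂ) + ε * I) ^ 1 * Complex.sinh (x + ε * I))⁻¹ := by
  have hπ : (π : ℂ) ≠ 0 := by exact_mod_cast Real.pi_ne_zero
  have h := integral_inv_mul_exp_contour hε
    (by simpa using integrable_exp_mul_inv_pow_mul_sinh hε hεπ hy 0)
  have him : ∀ t : ℝ, |(y + Real.log t).im| < π := fun t => by
    rwa [Complex.add_im, Complex.ofReal_im, add_zero]
  rw [log_one_add_exp_eq_integral hy]
  simp_rw [sigmoid_eq_integral hε hεπ (him _), mul_left_comm _ (I / (2 * (π : ℂ))), pow_one, mul_inv]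
  rw [intervalIntegral.integral_const_mul, h, ← mul_assoc]
  congr 1
  field_simp
  exact I_sq

/-- Integral representation of the dilogarithm: for `y ∈ ℝ + i(-π,π)`,
`(-i/(2π))·Li₂(-e^y) = ∫_{ℝ+i0⁺} e^{-iyv/π}/(4v² sinh v) dv`, where the contour
`ℝ + i0⁺` is realized as the horizontal line `ℝ + iε` for any `0 < ε < π` (all such
lines give the same value, since the only pole of the integrand between them and the
real axis would be `0`). -/
theorem dilog_integral_representation (y : ℂ) (hy1 : -π < y.im) (hy2 : y.im < π)
    (ε : ℝ) (hε0 : 0 < ε) (hεπ : ε < π) :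
    (-Complex.I / (2 * (π : ℂ))) * dilog (-Complex.exp y)
      = ∫ x : ℝ,
          Complex.exp (-Complex.I * y * ((x : ℂ) + (ε : ℂ) * Complex.I) / (π : ℂ)) /
            (4 * ((x : ℂ) + (ε : ℂ) * Complex.I) ^ 2
              * Complex.sinh ((x : ℂ) + (ε : ℂ) * Complex.I)) := by
  have hπ : (π : ℂ) ≠ 0 := by exact_mod_cast Real.pi_ne_zero
  have hy : |y.im| < π := abs_lt.2 ⟨hy1, hy2⟩
  have h := integral_inv_mul_exp_contour hε0 (integrable_exp_mul_inv_pow_mul_sinh hε0 hεπ hy 1)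
  have him : ∀ t : ℝ, |(y + Real.log t).im| < π := fun t => by
    rwa [Complex.add_im, Complex.ofReal_im, add_zero]
  rw [dilog_neg_exp_eq_integral]
  simp_rw [log_one_add_exp_eq_contour_integral hε0 hεπ (him _), mul_left_comm _ (-(1 / 2 : ℂ))]
  rw [intervalIntegral.integral_const_mul, h, ← mul_assoc, ← mul_neg, ← mul_assoc,
    ← integral_neg, ← integral_const_mul]
  refine integral_congr_ae (Eventually.of_forall fun x => ?_)
  have hv := re_add_im_mul_I_ne_zero hε0 x
  have hs := sinh_re_add_im_mul_I_ne_zero hε0 hεπ x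
  simp only
  field_simp
  ring_nf
  simp [I_sq]
end

section
/- Let b > 0, ħ = (b + b⁻¹)⁻², and Φ_b be Faddeev's quantum dilogarithm. For all z in the strip ℝ + i(-1/(2√ħ), 1/(2√ħ)), the inversion relation Φ_b(z)·Φ_b(-z) = e^{iπ(b² + b⁻²)/12}·e^{iπz²} holds. -/
open Complex Real

/-- Faddeev's quantum dilogarithm
`Φ_b(z) = exp((1/4)∫_{ℝ+i0⁺} e^{-2izw}/(sinh(bw) sinh(b⁻¹w) w) dw)`,
with the contour `ℝ + i0⁺` realized as the horizontal line `ℝ + iε₀` where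
`ε₀ = π·min(b,b⁻¹)/2` lies strictly between `0` and the first pole of the integrand on
the positive imaginary axis. -/
noncomputable def faddeevPhi (b : ℝ) (z : ℂ) : ℂ :=
  Complex.exp ((1 / 4 : ℂ) * ∫ x : ℝ,
    Complex.exp (-2 * Complex.I * z * ((x : ℂ) + ((π * min b b⁻¹ / 2 : ℝ) : ℂ) * Complex.I)) /
      (Complex.sinh ((b : ℂ) * ((x : ℂ) + ((π * min b b⁻¹ / 2 : ℝ) : ℂ) * Complex.I)) *
       Complex.sinh (((b : ℂ))⁻¹ * ((x : ℂ) + ((π * min b b⁻¹ / 2 : ℝ) : ℂ) * Complex.I)) *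
       ((x : ℂ) + ((π * min b b⁻¹ / 2 : ℝ) : ℂ) * Complex.I)))

open Filter Topology MeasureTheory

theorem Differentiable.exists_eq_sum_add_pow_mul {f : ℂ → ℂ} (hf : Differentiable ℂ f) (n : ℕ) :
    ∃ r : ℂ → ℂ, Differentiable ℂ r ∧ ∀ z, f z =
      (∑ i ∈ Finset.range n, (z ^ i / i.factorial) * iteratedDeriv i f 0) + z ^ n * r z := by
  obtain ⟨r, hr, h⟩ := (hf.analyticAt 0).exists_eq_sum_add_pow_mul n
  simp only [smul_eq_mul] at h
  refine ⟨r, fun z => ?_, h⟩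
  rcases eq_or_ne z 0 with rfl | hz
  · exact hr.differentiableAt
  · have hd : DifferentiableAt ℂ (fun z => (f z -
        ∑ i ∈ Finset.range n, (z ^ i / i.factorial) * iteratedDeriv i f 0) / z ^ n) z := by
      have := hf z
      have : z ^ n ≠ 0 := pow_ne_zero n hz
      fun_prop (disch := assumption)
    refine hd.congr_of_eventuallyEq ?_
    filter_upwards [isOpen_ne.mem_nhds hz] with w hw
    rw [h w, add_sub_cancel_left, mul_div_cancel_left₀ _ (pow_ne_zero n hw)]

theorem Complex.exists_sinh_eq_taylor :
    ∃ r : ℂ → ℂ, Differentiable ℂ r ∧ ∀ z, sinh z = z * (1 + z ^ 2 / 6 + z ^ 3 * r z) := by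
  obtain ⟨r, hr, h⟩ := differentiable_sinh.exists_eq_sum_add_pow_mul 4
  refine ⟨r, hr, fun z => (h z).trans ?_⟩
  simp [Finset.sum_range_succ, iteratedDeriv_succ, Nat.factorial]
  ring

theorem Complex.exists_exp_eq_taylor :
    ∃ r : ℂ → ℂ, Differentiable ℂ r ∧ ∀ z, exp z = 1 + z + z ^ 2 / 2 + z ^ 3 * r z := by
  obtain ⟨r, hr, h⟩ := differentiable_exp.exists_eq_sum_add_pow_mul 3
  refine ⟨r, hr, fun z => (h z).trans ?_⟩
  simp [Finset.sum_range_succ, iteratedDeriv_succ, Nat.factorial]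

theorem Complex.abs_sinh_re_le_norm_sinh (z : ℂ) : |Real.sinh z.re| ≤ ‖sinh z‖ := by
  have h : sinh z = ↑(Real.sinh z.re * Real.cos z.im) + ↑(Real.cosh z.re * Real.sin z.im) * I := by
    conv_lhs => rw [← re_add_im z, sinh_add, sinh_mul_I, cosh_mul_I]
    push_cast; ring
  rw [h, norm_add_mul_I]
  refine Real.abs_le_sqrt ?_
  nlinarith [Real.cosh_sq z.re, Real.sin_sq_add_cos_sq z.im, sq_nonneg (Real.sin z.im)]

theorem Complex.sinh_ne_zero_of_abs_im_lt_pi {z : ℂ} (hz : z ≠ 0) (h : |z.im| < π) :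
    sinh z ≠ 0 := by
  intro h0
  have h1 := abs_sinh_re_le_norm_sinh z
  rw [h0, norm_zero, abs_nonpos_iff, Real.sinh_eq_zero] at h1
  have hz' : z = z.im * I := by
    conv_lhs => rw [← re_add_im z, h1]
    simp
  rw [hz', sinh_mul_I, mul_eq_zero, or_iff_left I_ne_zero, ← ofReal_sin, ofReal_eq_zero,
    Real.sin_eq_zero_iff_of_lt_of_lt (by linarith [neg_abs_le z.im])
      (by linarith [le_abs_self z.im])] at h0
  exact hz (by rw [hz', h0]; simp)

theorem Complex.exp_abs_re_div_four_le_norm_sinh {z : ℂ} (h : 1 ≤ |z.re|) :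
    Real.exp |z.re| / 4 ≤ ‖sinh z‖ := by
  refine le_trans ?_ (abs_sinh_re_le_norm_sinh z)
  rw [Real.abs_sinh, Real.sinh_eq]
  have h1 := Real.add_one_le_exp |z.re|
  have h2 : Real.exp (-|z.re|) ≤ 1 := Real.exp_le_one_iff.2 (by linarith)
  linarith

/-- Truncated integrals over two horizontal lines agree in the limit when the function decays on
the vertical segments joining them. -/
theorem tendsto_integral_sub_integral_of_differentiableOn_strip {H : ℂ → ℂ} {ε : ℝ} (hε : 0 < ε)
    {B : ℝ → ℝ} (hd : DifferentiableOn ℂ H {w | |w.im| ≤ ε}) (hB : Tendsto B atTop (𝓝 0))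
    (hH : ∀ᶠ R in atTop, ∀ w : ℂ, |w.re| = R → |w.im| ≤ ε → ‖H w‖ ≤ B R) :
    Tendsto (fun R : ℝ => (∫ x in (-R)..R, H (x + ε * I)) -
      ∫ x in (-R)..R, H (x + (-ε : ℝ) * I)) atTop (𝓝 0) := by
  have hB' : Tendsto (fun R => 4 * ε * B R) atTop (𝓝 0) := by simpa using hB.const_mul (4 * ε)
  refine squeeze_zero_norm' ?_ hB'
  filter_upwards [hH, eventually_ge_atTop 0] with R hR hR0
  have key := integral_boundary_rect_eq_zero_of_differentiableOn H (-R + (-ε : ℝ) * I)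
    (R + ε * I) (hd.mono fun w hw => by
      have := (mem_reProdIm.1 hw).2
      simp [Set.uIcc_of_le (show -ε ≤ ε by linarith)] at this
      exact abs_le.2 this)
  have hv : ∀ s : ℝ, |s| = R → ‖∫ y in (-ε)..ε, H (s + y * I)‖ ≤ B R * (2 * ε) := by
    intro s hs
    refine (intervalIntegral.norm_integral_le_of_norm_le_const (C := B R) fun y hy => ?_).trans
      (by rw [show ε - -ε = 2 * ε by ring, abs_of_pos (by linarith)])
    rw [Set.uIoc_of_le (by linarith)] at hy
    exact hR _ (by simpa using hs) (by simpa using abs_le.2 ⟨hy.1.le, hy.2⟩)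
  have h1 := hv R (abs_of_nonneg hR0)
  have h2 := hv (-R) (by rw [abs_neg, abs_of_nonneg hR0])
  simp at key h2
  set A := ∫ y in (-ε)..ε, H (R + y * I)
  set D := ∫ y in (-ε)..ε, H (-R + y * I)
  have : (∫ x in (-R)..R, H (x + ε * I)) - ∫ x in (-R)..R, H (x + (-ε : ℝ) * I)
      = I * A - I * D := by
    push_cast
    simp only [neg_mul]
    linear_combination -key
  rw [this]
  refine (norm_sub_le _ _).trans ?_
  simp only [norm_mul, norm_I, one_mul]
  linarith

theorem Complex.add_ofReal_mul_I_ne_zero {c : ℝ} (hc : c ≠ 0) (x : ℝ) : (x : ℂ) + c * I ≠ 0 :=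
  fun h => hc (by simpa using congrArg im h)

theorem tendsto_integral_inv_pow_horizontal {c : ℝ} (hc : c ≠ 0) (k : ℕ) :
    Tendsto (fun R : ℝ => ∫ x in (-R)..R, (((x : ℂ) + c * I)⁻¹) ^ (k + 2)) atTop (𝓝 0) := by
  have hne := add_ofReal_mul_I_ne_zero hc
  have hderiv (x : ℝ) : HasDerivAt (fun x : ℝ => -(k + 1 : ℂ)⁻¹ * (((x : ℂ) + c * I)⁻¹) ^ (k + 1))
      ((((x : ℂ) + c * I)⁻¹) ^ (k + 2)) x := by
    have h := (((ofRealCLM.hasDerivAt (x := x)).add_const (c * I)).fun_inv (hne x)).fun_pow (k + 1)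
    convert! h.const_mul (-(k + 1 : ℂ)⁻¹) using 1
    have := hne x
    have : (k : ℂ) + 1 ≠ 0 := by exact_mod_cast k.succ_ne_zero
    simp
    field_simp
    ring
  have hint (R : ℝ) := intervalIntegral.integral_eq_sub_of_hasDerivAt (a := -R) (b := R)
    (fun x _ => hderiv x) (Continuous.intervalIntegrable (by
      have (x : ℝ) := hne x
      fun_prop (disch := assumption)) _ _)
  have hlim : Tendsto (fun w : ℂ => -(k + 1 : ℂ)⁻¹ * (w⁻¹) ^ (k + 1))
      (Bornology.cobounded ℂ) (𝓝 0) := by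
    simpa using ((tendsto_inv₀_cobounded (α := ℂ)).pow (k + 1)).const_mul (-(k + 1 : ℂ)⁻¹)
  have hcob (g : ℝ → ℝ) (hg : Tendsto (fun R => |g R|) atTop atTop) :
      Tendsto (fun R => (g R : ℂ) + c * I) atTop (Bornology.cobounded ℂ) := by
    refine tendsto_norm_atTop_iff_cobounded.1 (tendsto_atTop_mono (fun R => ?_) hg)
    simpa using abs_re_le_norm ((g R : ℂ) + c * I)
  simp_rw [hint]
  simpa using (hlim.comp (hcob (fun R => R) tendsto_abs_atTop_atTop)).sub
    (hlim.comp (hcob (fun R => -R) (by simpa using tendsto_abs_atTop_atTop)))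

theorem tendsto_integral_inv_sub_integral_inv_horizontal {ε : ℝ} (hε : 0 < ε) :
    Tendsto (fun R : ℝ => (∫ x in (-R)..R, ((x : ℂ) + ε * I)⁻¹) -
      ∫ x in (-R)..R, ((x : ℂ) + (-ε : ℝ) * I)⁻¹) atTop (𝓝 (-(2 * π * I))) := by
  have hI (c : ℝ) (hc : c ≠ 0) (R : ℝ) :
      IntervalIntegrable (fun x : ℝ => ((x : ℂ) + c * I)⁻¹) volume (-R) R :=
    Continuous.intervalIntegrable (by
      have (x : ℝ) := add_ofReal_mul_I_ne_zero hc x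
      fun_prop (disch := assumption)) _ _
  have h (R : ℝ) : (∫ x in (-R)..R, ((x : ℂ) + ε * I)⁻¹) -
      ∫ x in (-R)..R, ((x : ℂ) + (-ε : ℝ) * I)⁻¹
      = ((2 * Real.arctan (R / ε) : ℝ) : ℂ) * (-2 * I) := by
    rw [← intervalIntegral.integral_sub (hI _ hε.ne' R) (hI _ (neg_ne_zero.2 hε.ne') R)]
    have (x : ℝ) : ((x : ℂ) + ε * I)⁻¹ - ((x : ℂ) + (-ε : ℝ) * I)⁻¹
        = (((ε ^ 2 + x ^ 2)⁻¹ : ℝ) : ℂ) * (-2 * I * ε) := by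
      have h1 := add_ofReal_mul_I_ne_zero hε.ne' x
      have h2 := add_ofReal_mul_I_ne_zero (neg_ne_zero.2 hε.ne') x
      have h3 : ((ε ^ 2 + x ^ 2 : ℝ) : ℂ) = (x + ε * I) * (x + (-ε : ℝ) * I) := by
        push_cast
        linear_combination (ε ^ 2 : ℂ) * I_sq
      rw [ofReal_inv, h3, inv_sub_inv h1 h2, div_eq_inv_mul]
      push_cast
      ring
    simp_rw [this]
    rw [intervalIntegral.integral_mul_const, intervalIntegral.integral_ofReal,
      integral_inv_sq_add_sq hε.ne', neg_div, Real.arctan_neg]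
    have : (ε : ℂ) ≠ 0 := ofReal_ne_zero.2 hε.ne'
    push_cast
    field_simp
    ring
  simp_rw [h]
  have h1 : Tendsto (fun R => Real.arctan (R / ε)) atTop (𝓝 (π / 2)) :=
    (tendsto_nhds_of_tendsto_nhdsWithin Real.tendsto_arctan_atTop).comp
      (tendsto_id.atTop_div_const hε)
  have h2 := ((continuous_ofReal.tendsto _).comp (h1.const_mul 2)).mul_const (-2 * I)
  convert! h2 using 2
  push_cast
  ring

theorem integral_sub_integral_of_triple_pole {f H : ℂ → ℂ} {ε : ℝ} (hε : 0 < ε) {B : ℝ → ℝ}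
    {c₁ c₂ c₃ : ℂ} (hd : DifferentiableOn ℂ H {w | |w.im| ≤ ε})
    (hf : ∀ w : ℂ, w ≠ 0 → |w.im| ≤ ε →
      f w = c₃ * w⁻¹ ^ 3 + c₂ * w⁻¹ ^ 2 + c₁ * w⁻¹ + H w)
    (hB : Tendsto B atTop (𝓝 0))
    (hfB : ∀ᶠ R in atTop, ∀ w : ℂ, |w.re| = R → |w.im| ≤ ε → ‖f w‖ ≤ B R)
    (hi : Integrable fun x : ℝ => f (x + ε * I))
    (hi' : Integrable fun x : ℝ => f (x + (-ε : ℝ) * I)) :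
    (∫ x : ℝ, f (x + ε * I)) - ∫ x : ℝ, f (x + (-ε : ℝ) * I) = -(2 * π * I) * c₁ := by
  have hB' : Tendsto (fun R : ℝ => B R + ‖c₃‖ * R⁻¹ ^ 3 + ‖c₂‖ * R⁻¹ ^ 2 + ‖c₁‖ * R⁻¹)
      atTop (𝓝 0) := by
    have h := tendsto_inv_atTop_zero (𝕜 := ℝ)
    simpa using ((hB.add ((h.pow 3).const_mul ‖c₃‖)).add ((h.pow 2).const_mul ‖c₂‖)).add
      (h.const_mul ‖c₁‖)
  have hH := tendsto_integral_sub_integral_of_differentiableOn_strip hε hd hB' (by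
    filter_upwards [hfB, eventually_gt_atTop 0] with R hR hR0 w hw hw'
    have hwR : R ≤ ‖w‖ := hw ▸ abs_re_le_norm w
    have hinv : ‖w⁻¹‖ ≤ R⁻¹ := by
      rw [norm_inv]
      exact inv_anti₀ hR0 hwR
    have hw0 : w ≠ 0 := norm_pos_iff.1 (hR0.trans_le hwR)
    have : H w = f w - c₃ * w⁻¹ ^ 3 - c₂ * w⁻¹ ^ 2 - c₁ * w⁻¹ := by
      rw [hf w hw0 hw']
      ring
    rw [this]
    calc _ ≤ ‖f w‖ + ‖c₃ * w⁻¹ ^ 3‖ + ‖c₂ * w⁻¹ ^ 2‖ + ‖c₁ * w⁻¹‖ :=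
          norm_sub_le_of_le (norm_sub_le_of_le (norm_sub_le _ _) le_rfl) le_rfl
      _ ≤ _ := by
          simp only [norm_mul, norm_pow]
          gcongr
          exact hR w hw hw')
  have hlim (c : ℝ) (hc : Integrable fun x : ℝ => f (x + c * I)) :
      Tendsto (fun R : ℝ => ∫ x in (-R)..R, f (x + c * I)) atTop (𝓝 (∫ x : ℝ, f (x + c * I))) :=
    intervalIntegral_tendsto_integral hc tendsto_neg_atTop_atBot tendsto_id
  have hsplit (c : ℝ) (hc : c ≠ 0) (hcε : |c| ≤ ε) (hci : Integrable fun x : ℝ => f (x + c * I))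
      (R : ℝ) : ∫ x in (-R)..R, H (x + c * I) = (∫ x in (-R)..R, f (x + c * I)) -
        c₃ * (∫ x in (-R)..R, ((x : ℂ) + c * I)⁻¹ ^ 3) -
        c₂ * (∫ x in (-R)..R, ((x : ℂ) + c * I)⁻¹ ^ 2) -
        c₁ * (∫ x in (-R)..R, ((x : ℂ) + c * I)⁻¹) := by
    have hcont : Continuous fun x : ℝ => ((x : ℂ) + c * I)⁻¹ := by
      have (x : ℝ) := add_ofReal_mul_I_ne_zero hc x
      fun_prop (disch := assumption)
    have i3 : IntervalIntegrable (fun x : ℝ => c₃ * ((x : ℂ) + c * I)⁻¹ ^ 3) volume (-R) R :=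
      ((hcont.pow 3).const_mul c₃).intervalIntegrable _ _
    have i2 : IntervalIntegrable (fun x : ℝ => c₂ * ((x : ℂ) + c * I)⁻¹ ^ 2) volume (-R) R :=
      ((hcont.pow 2).const_mul c₂).intervalIntegrable _ _
    have i1 : IntervalIntegrable (fun x : ℝ => c₁ * ((x : ℂ) + c * I)⁻¹) volume (-R) R :=
      (hcont.const_mul c₁).intervalIntegrable _ _
    have i0 : IntervalIntegrable (fun x : ℝ => f (x + c * I)) volume (-R) R :=
      hci.intervalIntegrable
    simp only [← intervalIntegral.integral_const_mul]
    rw [← intervalIntegral.integral_sub i0 i3, ← intervalIntegral.integral_sub (i0.sub i3) i2,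
      ← intervalIntegral.integral_sub ((i0.sub i3).sub i2) i1]
    congr 1 with x
    rw [hf _ (add_ofReal_mul_I_ne_zero hc x) (by simpa using hcε)]
    ring
  have hε' : -ε ≠ 0 := neg_ne_zero.2 hε.ne'
  have hH' := ((((hlim ε hi).sub (hlim (-ε) hi')).sub
    (((tendsto_integral_inv_pow_horizontal hε.ne' 1).sub
      (tendsto_integral_inv_pow_horizontal hε' 1)).const_mul c₃)).sub
    (((tendsto_integral_inv_pow_horizontal hε.ne' 0).sub
      (tendsto_integral_inv_pow_horizontal hε' 0)).const_mul c₂)).sub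
    ((tendsto_integral_inv_sub_integral_inv_horizontal hε).const_mul c₁)
  have hEq := tendsto_nhds_unique (hH'.congr fun R => by
    rw [hsplit ε hε.ne' (abs_of_pos hε).le hi R,
      hsplit (-ε) hε' (by rw [abs_neg, abs_of_pos hε]) hi' R]
    ring) hH
  linear_combination hEq

/-- The integrand in the definition of Faddeev's quantum dilogarithm. -/
noncomputable def faddeevIntegrand (b : ℝ) (z w : ℂ) : ℂ :=
  Complex.exp (-2 * I * z * w) / (sinh (b * w) * sinh ((b : ℂ)⁻¹ * w) * w)

theorem faddeevIntegrand_neg (b : ℝ) (z w : ℂ) :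
    faddeevIntegrand b z (-w) = -faddeevIntegrand b (-z) w := by
  simp only [faddeevIntegrand, mul_neg, neg_mul, Complex.sinh_neg, neg_neg, div_neg]

theorem norm_faddeevIntegrand_le {b : ℝ} (hb : 0 < b) (z : ℂ) {ε : ℝ} {w : ℂ}
    (hw : max b b⁻¹ ≤ |w.re|) (hwε : |w.im| ≤ ε) :
    ‖faddeevIntegrand b z w‖ ≤
      16 * Real.exp (2 * |z.re| * ε) * Real.exp (-(b + b⁻¹ - 2 * |z.im|) * |w.re|) := by
  obtain ⟨h1, h2⟩ := max_le_iff.1 hw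
  have hbi : 0 < b⁻¹ := inv_pos.2 hb
  have hbw : (b * w).re = b * w.re := re_ofReal_mul _ _
  have hbw' : ((b : ℂ)⁻¹ * w).re = b⁻¹ * w.re := by rw [← ofReal_inv, re_ofReal_mul]
  have habs : |(b * w).re| = b * |w.re| := by rw [hbw, abs_mul, abs_of_pos hb]
  have habs' : |((b : ℂ)⁻¹ * w).re| = b⁻¹ * |w.re| := by rw [hbw', abs_mul, abs_of_pos hbi]
  have hbb : b * b⁻¹ = 1 := mul_inv_cancel₀ hb.ne'
  have s1 : Real.exp (b * |w.re|) / 4 ≤ ‖sinh (b * w)‖ := by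
    rw [← habs]
    refine exp_abs_re_div_four_le_norm_sinh ?_
    rw [habs]
    nlinarith
  have s2 : Real.exp (b⁻¹ * |w.re|) / 4 ≤ ‖sinh ((b : ℂ)⁻¹ * w)‖ := by
    rw [← habs']
    refine exp_abs_re_div_four_le_norm_sinh ?_
    rw [habs']
    nlinarith
  have s3 : 1 ≤ ‖w‖ := by
    refine le_trans ?_ (abs_re_le_norm w)
    nlinarith
  have e : ‖Complex.exp (-2 * I * z * w)‖ ≤ Real.exp (2 * |z.re| * ε + 2 * |z.im| * |w.re|) := by
    rw [Complex.norm_exp, Real.exp_le_exp]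
    have hre : (-2 * I * z * w).re = 2 * (z.re * w.im) + 2 * (z.im * w.re) := by
      simp
      ring
    have h3 : z.re * w.im ≤ |z.re| * ε := (le_abs_self _).trans
      (by rw [abs_mul]; gcongr)
    have h4 : z.im * w.re ≤ |z.im| * |w.re| := (le_abs_self _).trans (abs_mul _ _).le
    rw [hre]
    linarith
  rw [faddeevIntegrand, norm_div, norm_mul, norm_mul]
  calc _ ≤ Real.exp (2 * |z.re| * ε + 2 * |z.im| * |w.re|) /
        (Real.exp (b * |w.re|) / 4 * (Real.exp (b⁻¹ * |w.re|) / 4) * 1) := by gcongr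
    _ = _ := by
      rw [show -(b + b⁻¹ - 2 * |z.im|) * |w.re| =
        2 * |z.im| * |w.re| - b * |w.re| - b⁻¹ * |w.re| by ring, Real.exp_sub, Real.exp_sub,
        Real.exp_add]
      field_simp
      norm_num

theorem sinh_mul_sinh_inv_ne_zero {b : ℝ} (hb : 0 < b) {w : ℂ} (hw : w ≠ 0)
    (h : |w.im| < π * min b b⁻¹) : sinh (b * w) ≠ 0 ∧ sinh ((b : ℂ)⁻¹ * w) ≠ 0 := by
  have hbi : 0 < b⁻¹ := inv_pos.2 hb
  have hbb : b * b⁻¹ = 1 := mul_inv_cancel₀ hb.ne'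
  have hb0 : (b : ℂ) ≠ 0 := ofReal_ne_zero.2 hb.ne'
  constructor
  · refine sinh_ne_zero_of_abs_im_lt_pi (mul_ne_zero hb0 hw) ?_
    rw [im_ofReal_mul, abs_mul, abs_of_pos hb]
    calc b * |w.im| < b * (π * min b b⁻¹) := by gcongr
      _ ≤ b * (π * b⁻¹) := by gcongr; exact min_le_right _ _
      _ = π := by rw [mul_left_comm, hbb, mul_one]
  · refine sinh_ne_zero_of_abs_im_lt_pi (mul_ne_zero (inv_ne_zero hb0) hw) ?_
    rw [← ofReal_inv, im_ofReal_mul, abs_mul, abs_of_pos hbi]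
    calc b⁻¹ * |w.im| < b⁻¹ * (π * min b b⁻¹) := by gcongr
      _ ≤ b⁻¹ * (π * b) := by gcongr; exact min_le_left _ _
      _ = π := by rw [mul_left_comm, mul_comm b⁻¹, hbb, mul_one]

theorem integrable_faddeevIntegrand_horizontal {b : ℝ} (hb : 0 < b) {z : ℂ}
    (hz : 2 * |z.im| < b + b⁻¹) {c : ℝ} (hc : c ≠ 0) (hcb : |c| < π * min b b⁻¹) :
    Integrable fun x : ℝ => faddeevIntegrand b z (x + c * I) := by
  have hcont : Continuous fun x : ℝ => faddeevIntegrand b z (x + c * I) := by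
    have hne (x : ℝ) := add_ofReal_mul_I_ne_zero hc x
    have hs (x : ℝ) := sinh_mul_sinh_inv_ne_zero hb (hne x) (by simpa using hcb)
    have (x : ℝ) := mul_ne_zero (mul_ne_zero (hs x).1 (hs x).2) (hne x)
    unfold faddeevIntegrand
    fun_prop (disch := assumption)
  have hbound (x : ℝ) (hx : max b b⁻¹ ≤ |x|) := norm_faddeevIntegrand_le hb z
    (w := x + c * I) (ε := |c|) (by simpa using hx) (by simp)
  simp only [add_re, ofReal_re, mul_re, I_re, mul_zero, ofReal_im, I_im, mul_one, sub_self,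
    add_zero] at hbound
  set a := b + b⁻¹ - 2 * |z.im| with ha
  have ha0 : 0 < a := by linarith
  refine hcont.locallyIntegrable.integrable_of_isBigO_atBot_atTop
    (g := fun x => Real.exp (a * x)) (g' := fun x => Real.exp (-a * x)) ?_
    ⟨Set.Iic 0, Iic_mem_atBot 0, integrableOn_exp_mul_Iic ha0 0⟩ ?_
    ⟨Set.Ioi 0, Ioi_mem_atTop 0, integrableOn_exp_mul_Ioi (neg_lt_zero.2 ha0) 0⟩
  · refine Asymptotics.IsBigO.of_bound (16 * Real.exp (2 * |z.re| * |c|)) ?_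
    filter_upwards [tendsto_abs_atBot_atTop.eventually_ge_atTop (max b b⁻¹),
      eventually_le_atBot 0] with x hx hx0
    refine (hbound x hx).trans_eq ?_
    rw [Real.norm_eq_abs, Real.abs_exp, abs_of_nonpos hx0, neg_mul_neg]
  · refine Asymptotics.IsBigO.of_bound (16 * Real.exp (2 * |z.re| * |c|)) ?_
    filter_upwards [tendsto_abs_atTop_atTop.eventually_ge_atTop (max b b⁻¹),
      eventually_ge_atTop 0] with x hx hx0
    refine (hbound x hx).trans_eq ?_
    rw [Real.norm_eq_abs, Real.abs_exp, abs_of_nonneg hx0]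

/-- Laurent expansion of the integrand at its triple pole, with a remainder holomorphic on the
strip free of other poles. -/
theorem exists_faddeevIntegrand_eq_laurent {b : ℝ} (hb : 0 < b) (z : ℂ) :
    ∃ H : ℂ → ℂ, DifferentiableOn ℂ H {w | |w.im| < π * min b b⁻¹} ∧
      ∀ w : ℂ, w ≠ 0 → |w.im| < π * min b b⁻¹ → faddeevIntegrand b z w =
        1 * w⁻¹ ^ 3 + (-2 * I * z) * w⁻¹ ^ 2 +
          (-2 * z ^ 2 - ((b : ℂ) ^ 2 + ((b : ℂ) ^ 2)⁻¹) / 6) * w⁻¹ + H w := by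
  obtain ⟨r, hr, hsinh⟩ := exists_sinh_eq_taylor
  obtain ⟨q, hq, hexp⟩ := exists_exp_eq_taylor
  have hb0 : (b : ℂ) ≠ 0 := ofReal_ne_zero.2 hb.ne'
  set β : ℂ := (b : ℂ)⁻¹ with hβ
  set u : ℂ := -2 * I * z with hu
  have hu2 : u ^ 2 = -4 * z ^ 2 := by
    rw [hu]
    linear_combination 4 * z ^ 2 * I_sq
  have hbβ : (b : ℂ) * β = 1 := mul_inv_cancel₀ hb0
  let T : ℂ → ℂ := fun v => 1 + v ^ 2 / 6 + v ^ 3 * r v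
  have hT : Differentiable ℂ T := by fun_prop
  have hTne (v : ℂ) (h : v = 0 ∨ sinh v ≠ 0) : T v ≠ 0 := by
    rcases h with rfl | h
    · simp [T]
    · exact right_ne_zero_of_mul (hsinh v ▸ h)
  have hTT (w : ℂ) (hw : |w.im| < π * min b b⁻¹) : T (b * w) ≠ 0 ∧ T (β * w) ≠ 0 := by
    rcases eq_or_ne w 0 with rfl | h0
    · simp [T]
    · have := sinh_mul_sinh_inv_ne_zero hb h0 hw
      exact ⟨hTne _ (.inr this.1), hTne _ (.inr this.2)⟩
  let s : ℂ := (b ^ 2 + β ^ 2) / 6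
  let c : ℂ := u ^ 2 / 2 - s
  -- `T (b * w) * T (β * w) = 1 + s * w ^ 2 + w ^ 3 * P w`
  let P : ℂ → ℂ := fun w => w / 36 + (b ^ 3 * r (b * w)) * (1 + β ^ 2 * w ^ 2 / 6) +
    (β ^ 3 * r (β * w)) * (1 + b ^ 2 * w ^ 2 / 6) +
    w ^ 3 * (b ^ 3 * r (b * w)) * (β ^ 3 * r (β * w))
  have hP : Differentiable ℂ P := by fun_prop
  have hTP (w : ℂ) : T (b * w) * T (β * w) = 1 + s * w ^ 2 + w ^ 3 * P w := by
    simp only [T, P, s]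
    linear_combination (w ^ 4 / 36 * (b * β + 1)) * hbβ
  let N : ℂ → ℂ := fun w => u ^ 3 * q (u * w) - (u * s + c * s * w) -
    (1 + u * w + c * w ^ 2) * P w
  have hN : Differentiable ℂ N := by fun_prop
  refine ⟨fun w => N w / (T (b * w) * T (β * w)), ?_, fun w hw0 hw => ?_⟩
  · intro w hw
    have h := hTT w hw
    have : DifferentiableAt ℂ (fun w => N w / (T (b * w) * T (β * w))) w :=
      (hN w).fun_div (by fun_prop) (mul_ne_zero h.1 h.2)
    exact this.differentiableWithinAt
  · have h := mul_ne_zero (hTT w hw).1 (hTT w hw).2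
    have hden : sinh (b * w) * sinh (β * w) * w = w ^ 3 * (T (b * w) * T (β * w)) := by
      rw [hsinh, hsinh]
      simp only [T]
      linear_combination (w ^ 3 * T (b * w) * T (β * w)) * hbβ
    have hc : -2 * z ^ 2 - ((b : ℂ) ^ 2 + ((b : ℂ) ^ 2)⁻¹) / 6 = c := by
      simp only [c, s, hβ, hu2, inv_pow]
      ring
    rw [faddeevIntegrand, ← hβ, ← hu, hden, hc, hexp (u * w)]
    have hnum : 1 + u * w + (u * w) ^ 2 / 2 + (u * w) ^ 3 * q (u * w) =
        (1 + u * w + c * w ^ 2) * (T (b * w) * T (β * w)) + w ^ 3 * N w := by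
      rw [hTP]
      simp only [N, c]
      ring
    rw [hnum]
    beta_reduce
    generalize T (b * w) * T (β * w) = D at h ⊢
    field_simp

/-- Inversion relation for Faddeev's quantum dilogarithm: for `b > 0`,
`ħ = (b + b⁻¹)⁻²` and `z` in the strip `ℝ + i(-1/(2√ħ), 1/(2√ħ))`,
`Φ_b(z)·Φ_b(-z) = e^{iπ(b²+b⁻²)/12}·e^{iπz²}`. -/
theorem faddeevPhi_inversion (b : ℝ) (hb : 0 < b) (z : ℂ)
    (hz : |z.im| < 1 / (2 * Real.sqrt (((b + b⁻¹) ^ 2)⁻¹))) :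
    faddeevPhi b z * faddeevPhi b (-z)
      = Complex.exp (Complex.I * (π : ℂ) / 12 * ((b : ℂ) ^ 2 + ((b : ℂ) ^ 2)⁻¹))
        * Complex.exp (Complex.I * (π : ℂ) * z ^ 2) := by
  have hbi : 0 < b⁻¹ := inv_pos.2 hb
  have hz' : 2 * |z.im| < b + b⁻¹ := by
    rw [Real.sqrt_inv, Real.sqrt_sq (by positivity), one_div, mul_inv, inv_inv] at hz
    linarith
  set ε : ℝ := π * min b b⁻¹ / 2 with hε
  have hδ : 0 < π * min b b⁻¹ := mul_pos pi_pos (lt_min hb hbi)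
  have hε0 : 0 < ε := half_pos hδ
  have hεδ : ε < π * min b b⁻¹ := half_lt_self hδ
  have hΦ (z : ℂ) : faddeevPhi b z =
      Complex.exp (1 / 4 * ∫ x : ℝ, faddeevIntegrand b z (x + ε * I)) := rfl
  have hneg : ∫ x : ℝ, faddeevIntegrand b (-z) (x + ε * I) =
      -∫ x : ℝ, faddeevIntegrand b z (x + (-ε : ℝ) * I) := by
    rw [← integral_neg_eq_self, ← integral_neg]
    congr 1 with x
    rw [← neg_neg (faddeevIntegrand b (-z) _), ← faddeevIntegrand_neg]
    push_cast
    congr 2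
    ring
  obtain ⟨H, hH, hfH⟩ := exists_faddeevIntegrand_eq_laurent hb z
  have hB : Tendsto (fun R => 16 * Real.exp (2 * |z.re| * ε) *
      Real.exp (-(b + b⁻¹ - 2 * |z.im|) * R)) atTop (𝓝 0) := by
    have h := (Real.tendsto_exp_atBot.comp (tendsto_id.const_mul_atTop_of_neg
      (r := -(b + b⁻¹ - 2 * |z.im|)) (by linarith))).const_mul (16 * Real.exp (2 * |z.re| * ε))
    rwa [mul_zero] at h
  have key := integral_sub_integral_of_triple_pole hε0
    (hH.mono fun w (hw : |w.im| ≤ ε) => hw.trans_lt hεδ)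
    (fun w hw0 hw => hfH w hw0 (hw.trans_lt hεδ)) hB (by
      filter_upwards [eventually_ge_atTop (max b b⁻¹)] with R hR w hw hw'
      rw [← hw]
      exact norm_faddeevIntegrand_le hb z (hw ▸ hR) hw')
    (integrable_faddeevIntegrand_horizontal hb hz' hε0.ne' (by rwa [abs_of_pos hε0]))
    (integrable_faddeevIntegrand_horizontal hb hz' (neg_ne_zero.2 hε0.ne')
      (by rwa [abs_neg, abs_of_pos hε0]))
  rw [hΦ, hΦ, hneg, ← Complex.exp_add, ← Complex.exp_add]
  congr 1
  linear_combination (1 / 4) * key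
end
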